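/- arXiv:1903.08771 — 4 statements merged into one kernel-verified Lean document; each statement's English description precedes it below -/
import Mathlib

section
/- Let Ω ⊆ ℝⁿ be a bounded open set and let q : Ω → ℝ be a bounded measurable function. Then there exists a sequence (ψ_k)_{k∈ℕ} of functions ψ_k ∈ Σ such that for every k ∈ ℕ one has q(x) − 1/k ≤ ψ_k(x) ≤ q(x) for almost every x ∈ Ω. -/
open MeasureTheory

/-- A measurable set `M ⊆ ℝⁿ` is a density one set if it is non-empty and every `x ∈ M`
is a Lebesgue density point of `M`. -/
def DensityOneSet {n : ℕ} (M : Set (EuclideanSpace ℝ (Fin n))) : Prop :=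
  MeasurableSet M ∧ M.Nonempty ∧ ∀ x ∈ M,
    Filter.Tendsto (fun r : ℝ => volume (M ∩ Metric.ball x r) / volume (Metric.ball x r))
      (nhdsWithin 0 (Set.Ioi 0)) (nhds 1)

/-- `ψ` is a density one simple function on `Ω`, i.e. a finite linear combination of
indicator functions of density one subsets of `Ω`. -/
def DensityOneSimple {n : ℕ} (Ω : Set (EuclideanSpace ℝ (Fin n)))
    (ψ : EuclideanSpace ℝ (Fin n) → ℝ) : Prop :=
  ∃ (m : ℕ) (a : Fin m → ℝ) (M : Fin m → Set (EuclideanSpace ℝ (Fin n))),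
    (∀ j, DensityOneSet (M j) ∧ M j ⊆ Ω) ∧
    ψ = fun x => ∑ j, a j * (M j).indicator (fun _ => (1 : ℝ)) x


theorem exists_density_core {n : ℕ} (A : Set (EuclideanSpace ℝ (Fin n))) (hA : MeasurableSet A) :
    ∃ M ⊆ A, M =ᵐ[volume] A ∧ (M.Nonempty → DensityOneSet M) := by
  have h := Besicovitch.ae_tendsto_measure_inter_div (volume : Measure (EuclideanSpace ℝ (Fin n))) A
  rw [ae_restrict_iff' hA] at h
  obtain ⟨N, hN, hNm, hN0⟩ := exists_measurable_superset_of_null (ae_iff.1 h)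
  have hMA : (A \ N : Set _) =ᵐ[volume] A := sdiff_null_ae_eq_self hN0
  refine ⟨A \ N, Set.sdiff_subset, hMA, fun hne => ⟨hA.diff hNm, hne, fun x hx => ?_⟩⟩
  have hx' : x ∈ A → Filter.Tendsto (fun r => volume (A ∩ Metric.closedBall x r) / volume (Metric.closedBall x r))
      (nhdsWithin 0 (Set.Ioi 0)) (nhds 1) := by
    by_contra hc
    exact hx.2 (hN hc)
  refine (hx' hx.1).congr' ?_
  filter_upwards [self_mem_nhdsWithin] with r hr
  have hb : Metric.ball x r =ᵐ[volume] Metric.closedBall x r := by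
    refine ae_eq_of_subset_of_measure_ge Metric.ball_subset_closedBall ?_ measurableSet_ball.nullMeasurableSet
      (measure_closedBall_lt_top).ne
    rw [Measure.addHaar_closedBall _ _ (le_of_lt hr), Measure.addHaar_ball_of_pos _ _ hr]
  rw [measure_congr hb, measure_congr (hMA.inter hb)]

theorem densityOneSimple_sum {n : ℕ} {ι : Type*} (Ω : Set (EuclideanSpace ℝ (Fin n)))
    (M : ι → Set (EuclideanSpace ℝ (Fin n))) (a : ι → ℝ)
    (hM : ∀ i, (M i).Nonempty → DensityOneSet (M i)) (hs : ∀ i, M i ⊆ Ω) (s : Finset ι) :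
    DensityOneSimple Ω (fun x => ∑ j ∈ s, a j * (M j).indicator (fun _ => (1 : ℝ)) x) := by
  classical
  induction s using Finset.induction_on with
  | empty => exact ⟨0, Fin.elim0, Fin.elim0, fun j => j.elim0, by simp⟩
  | insert i s hi ih =>
    simp only [Finset.sum_insert hi]
    rcases (M i).eq_empty_or_nonempty with h | h
    · simpa [h] using ih
    · obtain ⟨m, b, P, hP, he⟩ := ih
      refine ⟨m + 1, Fin.cons (a i) b, Fin.cons (M i) P, ?_, ?_⟩
      · intro j
        refine Fin.cases ?_ (fun j => ?_) j
        · exact ⟨hM i h, hs i⟩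
        · exact hP j
      · funext x
        rw [Fin.sum_univ_succ]
        simp only [Fin.cons_zero, Fin.cons_succ]
        rw [congrFun he x]

theorem exists_densityOneSimple_approx
    {n : ℕ} (Ω : Set (EuclideanSpace ℝ (Fin n)))
    (hΩopen : IsOpen Ω) (hΩbdd : Bornology.IsBounded Ω)
    (q : EuclideanSpace ℝ (Fin n) → ℝ) (hq : Measurable q)
    (C : ℝ) (hqbdd : ∀ x ∈ Ω, |q x| ≤ C) :
    ∃ ψ : ℕ → EuclideanSpace ℝ (Fin n) → ℝ,
      ∀ k : ℕ, 0 < k → DensityOneSimple Ω (ψ k) ∧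
        ∀ᵐ x ∂(volume.restrict Ω), q x - 1 / (k : ℝ) ≤ ψ k x ∧ ψ k x ≤ q x := by
  have hA : ∀ (k : ℕ) (i : ℤ), MeasurableSet (Ω ∩ {x | ⌊(k : ℝ) * q x⌋ = i}) := fun k i =>
    hΩopen.measurableSet.inter ((hq.const_mul (k : ℝ)).floor (measurableSet_singleton i))
  choose M hMs hMe hMd using fun k i => exists_density_core _ (hA k i)
  refine ⟨fun k x => ∑ i ∈ Finset.Icc ⌊(k : ℝ) * (-C)⌋ ⌊(k : ℝ) * C⌋,
    ((i : ℝ) / k) * (M k i).indicator (fun _ => (1 : ℝ)) x, fun k hk => ⟨?_, ?_⟩⟩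
  · exact densityOneSimple_sum Ω (M k) (fun i : ℤ => (i : ℝ) / k) (hMd k)
      (fun i => (hMs k i).trans Set.inter_subset_left) _
  · rw [ae_restrict_iff' hΩopen.measurableSet]
    have hall : ∀ᵐ x ∂(volume : Measure (EuclideanSpace ℝ (Fin n))), ∀ i : ℤ,
        (x ∈ M k i ↔ x ∈ Ω ∩ {x | ⌊(k : ℝ) * q x⌋ = i}) :=
      ae_all_iff.2 fun i => (hMe k i).mem_iff
    filter_upwards [hall] with x hx hxΩ
    have hk' : (0 : ℝ) < k := by exact_mod_cast hk
    have hb := abs_le.1 (hqbdd x hxΩ)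
    have hmem : ⌊(k : ℝ) * q x⌋ ∈ Finset.Icc ⌊(k : ℝ) * (-C)⌋ ⌊(k : ℝ) * C⌋ :=
      Finset.mem_Icc.2 ⟨Int.floor_le_floor (mul_le_mul_of_nonneg_left hb.1 hk'.le),
        Int.floor_le_floor (mul_le_mul_of_nonneg_left hb.2 hk'.le)⟩
    have hsum : ∑ i ∈ Finset.Icc ⌊(k : ℝ) * (-C)⌋ ⌊(k : ℝ) * C⌋,
        ((i : ℝ) / k) * (M k i).indicator (fun _ => (1 : ℝ)) x = (⌊(k : ℝ) * q x⌋ : ℝ) / k := by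
      rw [Finset.sum_eq_single_of_mem _ hmem]
      · rw [Set.indicator_of_mem ((hx _).2 ⟨hxΩ, rfl⟩), mul_one]
      · intro i _ hi
        rw [Set.indicator_of_notMem (fun h => hi ((hx i).1 h).2.symm), mul_zero]
    simp only [hsum]
    have h1 := Int.floor_le ((k : ℝ) * q x)
    have h2 := Int.lt_floor_add_one ((k : ℝ) * q x)
    constructor
    · rw [le_div_iff₀ hk', sub_mul, one_div, inv_mul_cancel₀ hk'.ne']
      linarith
    · rw [div_le_iff₀ hk']
      linarith
end

section
/- Let Ω ⊆ ℝⁿ be a bounded open set with positive Lebesgue measure, let Q be a finite-dimensional subspace of L^∞(Ω), and let Q₁ = { r ∈ Q : ‖r‖_{L^∞(Ω)} = 1 }. Then there exist m ∈ ℕ and measurable subsets M₁, …, M_m ⊆ Ω, each of positive Lebesgue measure, such that for every r ∈ Q₁ there exists j ∈ {1, …, m} with either r(x) ≥ 1/2 for almost every x ∈ M_j, or r(x) ≤ −1/2 for almost every x ∈ M_j. -/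
open MeasureTheory

lemma test_aux_bound {α : Type*} [MeasurableSpace α] {μ : Measure α} (f : Lp ℝ ⊤ μ) :
    ∀ᵐ x ∂μ, |f x| ≤ ‖f‖ := by
  have h := ae_le_eLpNormEssSup (f := f) (μ := μ)
  filter_upwards [h] with x hx
  rw [← eLpNorm_exponent_top] at hx
  have h2 := ENNReal.toReal_mono (Lp.eLpNorm_ne_top f) hx
  simpa [Lp.norm_def] using h2

lemma test_aux_norm {α : Type*} [MeasurableSpace α] {μ : Measure α} (f : Lp ℝ ⊤ μ) (C : ℝ)
    (hC : 0 ≤ C) (h : ∀ᵐ x ∂μ, |f x| ≤ C) : ‖f‖ ≤ C := by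
  rw [Lp.norm_def, eLpNorm_exponent_top]
  have := eLpNormEssSup_le_of_ae_bound (f := f) (μ := μ) (C := C) h
  exact ENNReal.toReal_le_of_le_ofReal hC this

lemma test_aux_set {α : Type*} [MeasurableSpace α] {ν : Measure α} (Ω : Set α)
    (hΩ : MeasurableSet Ω) (s : Lp ℝ ⊤ (ν.restrict Ω)) (hs : ‖s‖ = 1) :
    ∃ M : Set α, (MeasurableSet M ∧ M ⊆ Ω ∧ 0 < ν M) ∧
      ∀ r : Lp ℝ ⊤ (ν.restrict Ω), dist r s < 1 / 4 →
        (∀ᵐ x ∂(ν.restrict Ω), x ∈ M → (1 / 2 : ℝ) ≤ r x) ∨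
             (∀ᵐ x ∂(ν.restrict Ω), x ∈ M → r x ≤ -(1 / 2 : ℝ)) := by
  have hm : Measurable s := (Lp.stronglyMeasurable s).measurable
  have h1 : MeasurableSet {x | (3/4 : ℝ) ≤ s x} := measurableSet_le measurable_const hm
  have h2 : MeasurableSet {x | s x ≤ -(3/4 : ℝ)} := measurableSet_le hm measurable_const
  have key : ∀ r : Lp ℝ ⊤ (ν.restrict Ω), dist r s < 1 / 4 →
      ∀ᵐ x ∂(ν.restrict Ω), |r x - s x| ≤ 1 / 4 := by
    intro r hr
    rw [dist_eq_norm] at hr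
    filter_upwards [test_aux_bound (r - s), Lp.coeFn_sub r s] with x hx hx2
    rw [hx2] at hx
    exact hx.trans hr.le
  by_cases p1 : 0 < ν ({x | (3/4 : ℝ) ≤ s x} ∩ Ω)
  · refine ⟨_, ⟨h1.inter hΩ, Set.inter_subset_right, p1⟩, fun r hr => Or.inl ?_⟩
    filter_upwards [key r hr] with x hx hxM
    have := abs_le.1 hx
    have h3 : (3/4 : ℝ) ≤ s x := hxM.1
    linarith
  by_cases p2 : 0 < ν ({x | s x ≤ -(3/4 : ℝ)} ∩ Ω)
  · refine ⟨_, ⟨h2.inter hΩ, Set.inter_subset_right, p2⟩, fun r hr => Or.inr ?_⟩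
    filter_upwards [key r hr] with x hx hxM
    have := abs_le.1 hx
    have h3 : s x ≤ -(3/4 : ℝ) := hxM.1
    linarith
  exfalso
  rw [not_lt, nonpos_iff_eq_zero, ← Measure.restrict_apply h1] at p1
  rw [not_lt, nonpos_iff_eq_zero, ← Measure.restrict_apply h2] at p2
  have := test_aux_norm s (3/4) (by norm_num) (by
    filter_upwards [measure_eq_zero_iff_ae_notMem.1 p1, measure_eq_zero_iff_ae_notMem.1 p2]
      with x a b
    simp only [Set.mem_setOf_eq, not_le] at a b
    exact abs_le.2 ⟨b.le, a.le⟩)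
  linarith



/-- (Lemma 5.4 of the paper): if `Q` is a finite-dimensional subspace of
`L^∞(Ω)` on a bounded open `Ω ⊆ ℝⁿ` of positive measure, then there are finitely many
measurable subsets `M₁,…,M_m ⊆ Ω` of positive measure such that every `r ∈ Q` with
`‖r‖_{L^∞} = 1` satisfies `r ≥ 1/2` a.e. on some `M_j` or `r ≤ -1/2` a.e. on some `M_j`. -/
theorem exists_test_sets_for_finiteDimensional_Linfty
    {n : ℕ} (Ω : Set (EuclideanSpace ℝ (Fin n)))
    (hΩopen : IsOpen Ω) (hΩbdd : Bornology.IsBounded Ω) (hΩpos : 0 < volume Ω)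
    (Q : Submodule ℝ (Lp ℝ ⊤ (volume.restrict Ω)))
    (hQ : FiniteDimensional ℝ Q) :
    ∃ (m : ℕ) (M : Fin m → Set (EuclideanSpace ℝ (Fin n))),
      (∀ j, MeasurableSet (M j) ∧ M j ⊆ Ω ∧ 0 < volume (M j)) ∧
      ∀ r ∈ Q, ‖r‖ = 1 →
        ∃ j, (∀ᵐ x ∂(volume.restrict Ω), x ∈ M j → (1 / 2 : ℝ) ≤ r x) ∨
             (∀ᵐ x ∂(volume.restrict Ω), x ∈ M j → r x ≤ -(1 / 2 : ℝ)) := by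
  have hc : IsCompact (Metric.sphere (0 : Q) 1) := by
    haveI : ProperSpace Q := FiniteDimensional.proper ℝ Q
    exact isCompact_sphere 0 1
  obtain ⟨t, ht, htf, hcov⟩ := hc.finite_cover_balls (e := 1 / 4) (by norm_num)
  have hex : ∀ s : t, _ := fun s =>
    test_aux_set (ν := volume) Ω hΩopen.measurableSet (s.1 : Lp ℝ ⊤ (volume.restrict Ω))
      (by simpa using ht s.2)
  choose M hM hM2 using hex
  haveI : Finite t := htf
  obtain ⟨m, ⟨e⟩⟩ := Finite.exists_equiv_fin t
  refine ⟨m, fun j => M (e.symm j), fun j => hM _, fun r hr hn => ?_⟩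
  have hmem := hcov (show (⟨r, hr⟩ : Q) ∈ Metric.sphere (0 : Q) 1 by simpa using hn)
  simp only [Set.mem_iUnion] at hmem
  obtain ⟨s, hs, hd⟩ := hmem
  refine ⟨e ⟨s, hs⟩, ?_⟩
  simp only [Equiv.symm_apply_apply]
  exact hM2 ⟨s, hs⟩ r hd
end

section
/- Let H be a real Hilbert space, let H₁, H₂, H₃ ⊆ H be closed subspaces of finite codimension in H, and let L₁ : H₁ → H, L₂ : H₂ → H, L₃ : H₃ → H be bounded linear operators. Suppose L₁ ≤_{d₁} L₂ and L₂ ≤_{d₂} L₃ for natural numbers d₁, d₂. Then L₁ ≤_{d} L₃ with d = d₁ + d₂ + codim(H₂). -/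
open scoped RealInnerProductSpace

/-- The generalized Loewner order `L₁ ≤_d L₂` (Definition 3.1 of the paper): there exists a
subspace `W ⊆ H₁ ∩ H₂` with `dim W ≤ d` such that `⟨L₂ v - L₁ v, v⟩ ≥ 0` for all `v` in the
orthogonal complement of `W` taken inside `H₁ ∩ H₂`. -/
def LoewnerLE {H : Type*} [NormedAddCommGroup H] [InnerProductSpace ℝ H]
    {H₁ H₂ : Submodule ℝ H} (L₁ : H₁ →L[ℝ] H) (L₂ : H₂ →L[ℝ] H) (d : ℕ) : Prop :=
  ∃ W : Submodule ℝ H, W ≤ H₁ ⊓ H₂ ∧ FiniteDimensional ℝ W ∧ Module.finrank ℝ W ≤ d ∧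
    ∀ (v : H) (h₁ : v ∈ H₁) (h₂ : v ∈ H₂),
      (∀ w ∈ W, ⟪v, w⟫ = 0) → 0 ≤ ⟪L₂ ⟨v, h₂⟩ - L₁ ⟨v, h₁⟩, v⟫

/-- Transitivity of the generalized Loewner order (remark after
Definition 3.1 of the paper): if `L₁ ≤_{d₁} L₂` and `L₂ ≤_{d₂} L₃`, then
`L₁ ≤_{d₁+d₂+codim(H₂)} L₃`, where `codim(H₂) = dim H₂^⊥`. -/
theorem LoewnerLE.trans'
    {H : Type*} [NormedAddCommGroup H] [InnerProductSpace ℝ H] [CompleteSpace H]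
    {H₁ H₂ H₃ : Submodule ℝ H}
    (hc₁ : IsClosed (H₁ : Set H)) (hc₂ : IsClosed (H₂ : Set H)) (hc₃ : IsClosed (H₃ : Set H))
    (hf₁ : FiniteDimensional ℝ H₁ᗮ) (hf₂ : FiniteDimensional ℝ H₂ᗮ)
    (hf₃ : FiniteDimensional ℝ H₃ᗮ)
    (L₁ : H₁ →L[ℝ] H) (L₂ : H₂ →L[ℝ] H) (L₃ : H₃ →L[ℝ] H)
    (d₁ d₂ : ℕ) (h12 : LoewnerLE L₁ L₂ d₁) (h23 : LoewnerLE L₂ L₃ d₂) :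
    LoewnerLE L₁ L₃ (d₁ + d₂ + Module.finrank ℝ H₂ᗮ) := by
  obtain ⟨W₁, hW₁, fW₁, dW₁, p₁⟩ := h12
  obtain ⟨W₂, hW₂, fW₂, dW₂, p₂⟩ := h23
  haveI : CompleteSpace (H₁ ⊓ H₃ : Submodule ℝ H) :=
    IsClosed.completeSpace_coe (hs := hc₁.inter hc₃)
  haveI : CompleteSpace H₂ := IsClosed.completeSpace_coe (hs := hc₂)
  set K : Submodule ℝ H := H₁ ⊓ H₃ with hK
  let U : Submodule ℝ H := W₁ ⊔ W₂ ⊔ H₂ᗮ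
  have hfU : FiniteDimensional ℝ U := inferInstanceAs (FiniteDimensional ℝ ↥(W₁ ⊔ W₂ ⊔ H₂ᗮ))
  let P : H →ₗ[ℝ] H := (K.starProjection : H →L[ℝ] H).toLinearMap
  refine ⟨U.map P, ?_, inferInstance, ?_, ?_⟩
  · rintro _ ⟨u, -, rfl⟩
    exact K.starProjection_apply_mem u
  · have a := Submodule.finrank_map_le P U
    have b : Module.finrank ℝ U ≤ _ :=
      Submodule.finrank_add_le_finrank_add_finrank (W₁ ⊔ W₂) H₂ᗮ
    have c := Submodule.finrank_add_le_finrank_add_finrank W₁ W₂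
    omega
  · intro v h₁ h₃ hv
    have hvK : v ∈ K := ⟨h₁, h₃⟩
    have key : ∀ u ∈ U, ⟪v, u⟫ = 0 := by
      intro u hu
      have h := hv (P u) ⟨u, hu, rfl⟩
      have e : ⟪K.starProjection v, u⟫ = ⟪v, K.starProjection u⟫ :=
        K.inner_starProjection_left_eq_right v u
      rw [Submodule.starProjection_eq_self_iff.mpr hvK] at e
      exact e.trans h
    have h₂ : v ∈ H₂ := by
      rw [← Submodule.orthogonal_orthogonal H₂, Submodule.mem_orthogonal']
      exact fun u hu => key u (Submodule.mem_sup_right hu)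
    have q₁ := p₁ v h₁ h₂ fun w hw =>
      key w (Submodule.mem_sup_left (Submodule.mem_sup_left hw))
    have q₂ := p₂ v h₂ h₃ fun w hw =>
      key w (Submodule.mem_sup_left (Submodule.mem_sup_right hw))
    rw [inner_sub_left] at q₁ q₂ ⊢
    linarith
end

section
/- Let H be a real Hilbert space, let B : H × H → ℝ be a symmetric bilinear form, let n ∈ ℕ, set δ := 1/(n+2), and let c > 0. Suppose v₁, …, v_{n+1} ∈ H satisfy: B(vᵢ, vᵢ) ≥ 2 − δ for all i; |B(vᵢ, vⱼ)| ≤ δ for all i ≠ j; |⟨vᵢ, vⱼ⟩| ≤ (c/2)δ for all i ≠ j; and ‖vᵢ‖² ≤ (1 + δ)(c/2) for all i. Then for every subspace V ⊆ H with dim(V) ≤ n there exist coefficients λ₁, …, λ_{n+1} ∈ ℝ with Σᵢ λᵢ² = 1 such that the vector F := Σᵢ λᵢ vᵢ is orthogonal to V and satisfies B(F, F) ≥ 1 and ‖F‖² ≤ c. -/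
open scoped RealInnerProductSpace

theorem quad_bound_aux (n : ℕ) (a : Fin (n + 1) → Fin (n + 1) → ℝ) (M e : ℝ) (he : 0 ≤ e)
    (hd : ∀ i, a i i ≤ M) (ho : ∀ i j, i ≠ j → |a i j| ≤ e)
    (l : Fin (n + 1) → ℝ) (hl : ∑ i, l i ^ 2 = 1) :
    ∑ i, ∑ j, l i * (l j * a i j) ≤ M + n * e := by
  have key : ∀ i j, l i * (l j * a i j) ≤
      e * (|l i| * |l j|) + (if i = j then l i ^ 2 * (M - e) else 0) := by
    intro i j
    by_cases h : i = j
    · subst h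
      have h0 := mul_le_mul_of_nonneg_left (hd i) (sq_nonneg (l i))
      rw [if_pos rfl, abs_mul_abs_self]
      nlinarith
    · rw [if_neg h, add_zero]
      calc l i * (l j * a i j) ≤ |l i * (l j * a i j)| := le_abs_self _
        _ = (|l i| * |l j|) * |a i j| := by rw [abs_mul, abs_mul, mul_assoc]
        _ ≤ (|l i| * |l j|) * e := mul_le_mul_of_nonneg_left (ho i j h) (by positivity)
        _ = _ := by ring
  have hcs : (∑ i, |l i|) ^ 2 ≤ (n + 1 : ℝ) := by
    have := sq_sum_le_card_mul_sum_sq (s := (Finset.univ : Finset (Fin (n + 1))))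
      (f := fun i => |l i|)
    simpa [hl] using this
  calc ∑ i, ∑ j, l i * (l j * a i j)
      ≤ ∑ i, ∑ j, (e * (|l i| * |l j|) + (if i = j then l i ^ 2 * (M - e) else 0)) :=
        Finset.sum_le_sum fun i _ => Finset.sum_le_sum fun j _ => key i j
    _ = e * (∑ i, |l i|) ^ 2 + (M - e) := by
        simp only [Finset.sum_add_distrib, Finset.sum_ite_eq, Finset.mem_univ, if_true,
          ← Finset.mul_sum, ← Finset.sum_mul, hl, one_mul, sq (∑ i, |l i|)]
    _ ≤ M + n * e := by nlinarith

/-- (abstract content of Lemma 5.6(c) of the paper): given `n+1` vectors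
`v₁,…,v_{n+1}` in a real Hilbert space that are approximately normalized and approximately
orthogonal with respect to a symmetric bilinear form `B` and the inner product (with tolerance
`δ = 1/(n+2)`), every subspace `V` of dimension at most `n` admits a normalized linear
combination `F = Σ λᵢ vᵢ` with `Σ λᵢ² = 1` that is orthogonal to `V` and satisfies
`B(F,F) ≥ 1` and `‖F‖² ≤ c`. -/
theorem exists_comb_orth_of_approx_orthogonal
    {H : Type*} [NormedAddCommGroup H] [InnerProductSpace ℝ H] [CompleteSpace H]
    (B : H →ₗ[ℝ] H →ₗ[ℝ] ℝ) (hBsymm : ∀ x y, B x y = B y x)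
    (n : ℕ) (δ : ℝ) (hδ : δ = 1 / (n + 2)) (c : ℝ) (hc : 0 < c)
    (v : Fin (n + 1) → H)
    (h1 : ∀ i, 2 - δ ≤ B (v i) (v i))
    (h2 : ∀ i j, i ≠ j → |B (v i) (v j)| ≤ δ)
    (h3 : ∀ i j, i ≠ j → |⟪v i, v j⟫| ≤ (c / 2) * δ)
    (h4 : ∀ i, ‖v i‖ ^ 2 ≤ (1 + δ) * (c / 2)) :
    ∀ V : Submodule ℝ H, Module.rank ℝ V ≤ n →
      ∃ lam : Fin (n + 1) → ℝ, ∑ i, lam i ^ 2 = 1 ∧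
        (∀ w ∈ V, ⟪∑ i, lam i • v i, w⟫ = 0) ∧
        1 ≤ B (∑ i, lam i • v i) (∑ i, lam i • v i) ∧
        ‖∑ i, lam i • v i‖ ^ 2 ≤ c := by
  intro V hV
  have hn : (0 : ℝ) ≤ n := Nat.cast_nonneg n
  have hδ0 : 0 ≤ δ := by rw [hδ]; positivity
  have hδ1 : (n + 2) * δ = 1 := by rw [hδ]; field_simp
  have hfin : Module.Finite ℝ V :=
    Module.rank_lt_aleph0_iff.1 (hV.trans_lt (Cardinal.natCast_lt_aleph0))
  have hrank : Module.finrank ℝ V ≤ n := Module.finrank_le_of_rank_le hV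
  let T : (Fin (n + 1) → ℝ) →ₗ[ℝ] Module.Dual ℝ V :=
    ((innerₗ H).compl₂ V.subtype) ∘ₗ (Fintype.linearCombination ℝ v)
  have hT : LinearMap.ker T ≠ ⊥ := by
    apply LinearMap.ker_ne_bot_of_finrank_lt
    rw [Subspace.dual_finrank_eq, Module.finrank_fin_fun]
    omega
  obtain ⟨m, hm, hm0⟩ := (Submodule.ne_bot_iff _).1 hT
  have hS : 0 < ∑ i, m i ^ 2 := by
    obtain ⟨i, hi⟩ := Function.ne_iff.1 hm0
    exact Finset.sum_pos' (fun i _ => sq_nonneg _)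
      ⟨i, Finset.mem_univ i, by have : m i ≠ 0 := hi
                                positivity⟩
  set s := Real.sqrt (∑ i, m i ^ 2) with hs
  have hs2 : s ^ 2 = ∑ i, m i ^ 2 := Real.sq_sqrt hS.le
  have hs0 : 0 < s := Real.sqrt_pos.2 hS
  have hl : ∑ i, (s⁻¹ • m) i ^ 2 = 1 := by
    simp only [Pi.smul_apply, smul_eq_mul, mul_pow, ← Finset.mul_sum, ← hs2]
    field_simp
  have hlk : T (s⁻¹ • m) = 0 := by
    rw [map_smul, LinearMap.mem_ker.1 hm, smul_zero]
  generalize s⁻¹ • m = l at hl hlk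
  refine ⟨l, hl, ?_, ?_, ?_⟩
  · intro w hw
    have := LinearMap.congr_fun hlk ⟨w, hw⟩
    simpa [T, Fintype.linearCombination_apply, sum_inner, real_inner_smul_left] using this
  · have := quad_bound_aux n (fun i j => - B (v i) (v j)) (δ - 2) δ hδ0
      (fun i => by linarith [h1 i]) (fun i j h => by simpa using h2 i j h) l hl
    have e : B (∑ i, l i • v i) (∑ i, l i • v i)
        = - ∑ i, ∑ j, l i * (l j * - B (v i) (v j)) := by
      simp only [map_sum, map_smul, LinearMap.sum_apply, LinearMap.smul_apply, smul_eq_mul,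
        mul_neg, Finset.sum_neg_distrib, neg_neg, Finset.mul_sum]
      try rw [Finset.sum_comm]
      try exact Finset.sum_congr rfl fun i _ => Finset.sum_congr rfl fun j _ => by ring
    rw [e]
    nlinarith
  · have := quad_bound_aux n (fun i j => ⟪v i, v j⟫) ((1 + δ) * (c / 2)) (c / 2 * δ)
      (by positivity) (fun i => by simpa using h4 i) h3 l hl
    have e : ‖∑ i, l i • v i‖ ^ 2 = ∑ i, ∑ j, l i * (l j * ⟪v i, v j⟫) := by
      rw [← real_inner_self_eq_norm_sq]
      simp only [sum_inner, inner_sum, real_inner_smul_left, real_inner_smul_right]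
      refine Finset.sum_congr rfl fun i _ => Finset.sum_congr rfl fun j _ => ?_
      rw [real_inner_comm]
    rw [e]
    nlinarith
end
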